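/- Let X be a nonzero complex Banach space and T a bounded linear operator on X such that every λ ∈ ℂ with |λ| > 1 belongs to the resolvent set of T and ‖(λ−1)(λ−T)⁻¹‖ ≤ K for all such λ. Then there exists r ∈ (0,1) such that the spectrum σ(T) is contained in B_r, the convex hull of the singleton {1} and the closed ball of radius r centred at 0. -/

import Mathlib

/-!
The resolvent at `l` is at least as large as the inverse of the distance from `l` to the spectrum,
so the Ritt condition gives `‖l - 1‖ ≤ K * ‖l - z‖` for `z` in the spectrum and `1 < ‖l‖`, hence
also for `1 ≤ ‖l‖`. Taking for `l` the point of the unit circle nearest to `z` yields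
`‖1 - z‖ ≤ (K + 1) * (1 - ‖z‖)`: the spectrum lies in a Stolz region with vertex `1`.

Such a region lies in some `B_r`. With `C = K + 1`, its points at distance at least `C⁻¹` from
`1` have norm at most `1 - C⁻¹ ^ 2`. A point closer to `1` lies on the segment from `1` to the
point at distance `C⁻¹` on the same ray, and the opening angle of the region bounds the norm of
that point by `√(1 - C⁻¹ ^ 2)`.
-/

open scoped RealInnerProductSpace

section StolzRegion

variable {E : Type*} [NormedAddCommGroup E]

/-- The Stolz region with vertex `e` and constant `C`, where `e` is meant to be a unit vector. For
`e = 1` in `ℂ` this is `Complex.stolzSet` with weak inequalities, so that the vertex belongs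
to it. -/
def stolzRegion (e : E) (C : ℝ) : Set E :=
  {x | ‖e - x‖ ≤ C * (1 - ‖x‖)}

variable {e x : E} {C : ℝ}

theorem norm_le_sqrt_of_mem_stolzRegion_of_le_norm_sub (hC : 0 < C) (hx : x ∈ stolzRegion e C)
    (hfar : C⁻¹ ≤ ‖e - x‖) : ‖x‖ ≤ √(1 - C⁻¹ ^ 2) := by
  have hgap : C⁻¹ ^ 2 ≤ 1 - ‖x‖ := by
    rw [sq, inv_mul_le_iff₀ hC]
    exact hfar.trans hx
  calc
    ‖x‖ ≤ 1 - C⁻¹ ^ 2 := le_sub_comm.mp hgap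
    _ ≤ √(1 - C⁻¹ ^ 2) := Real.le_sqrt_self_iff.mpr (sub_le_self 1 (sq_nonneg _))

variable [InnerProductSpace ℝ E]

theorem norm_sub_le_mul_inner_of_mem_stolzRegion (he : ‖e‖ = 1) (hC : 0 ≤ C)
    (hx : x ∈ stolzRegion e C) : ‖e - x‖ ≤ C * ⟪e, e - x⟫ := by
  have hcauchy : ⟪e, x⟫ ≤ ‖x‖ := by simpa [he] using real_inner_le_norm e x
  calc
    ‖e - x‖ ≤ C * (1 - ‖x‖) := hx
    _ ≤ C * (1 - ⟪e, x⟫) := by gcongr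
    _ = C * ⟪e, e - x⟫ := by rw [inner_sub_right, real_inner_self_eq_norm_sq, he, one_pow]

theorem norm_sub_le_sqrt_one_sub_norm_sq {u : E} (he : ‖e‖ = 1) (hu : ‖u‖ ^ 2 ≤ ⟪e, u⟫) :
    ‖e - u‖ ≤ √(1 - ‖u‖ ^ 2) := by
  refine Real.le_sqrt_of_sq_le ?_
  rw [norm_sub_sq_real, he]
  linarith

theorem mem_convexHull_of_mem_stolzRegion_of_norm_sub_le (he : ‖e‖ = 1) (hC : 0 < C)
    (hx : x ∈ stolzRegion e C) (hnear : ‖e - x‖ ≤ C⁻¹) :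
    x ∈ convexHull ℝ ({e} ∪ Metric.closedBall 0 √(1 - C⁻¹ ^ 2)) := by
  rcases eq_or_ne x e with rfl | hne
  · exact subset_convexHull ℝ _ (Or.inl rfl)
  have hpos : 0 < ‖e - x‖ := norm_pos_iff.mpr (sub_ne_zero.mpr hne.symm)
  set s := C * ‖e - x‖ with hs
  have hs0 : 0 < s := by positivity
  have hs1 : s ≤ 1 := by rwa [hs, ← le_inv_mul_iff₀ hC, mul_one]
  set u := s⁻¹ • (e - x) with hu
  have hu_norm : ‖u‖ = C⁻¹ := by
    rw [hu, norm_smul, Real.norm_of_nonneg (by positivity), hs]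
    field_simp
  have hu_inner : ‖u‖ ^ 2 ≤ ⟪e, u⟫ := by
    rw [hu_norm, hu, real_inner_smul_right, ← div_eq_inv_mul, le_div_iff₀ hs0]
    calc
      C⁻¹ ^ 2 * s = C⁻¹ * ‖e - x‖ := by rw [hs]; field_simp
      _ ≤ ⟪e, e - x⟫ := (inv_mul_le_iff₀ hC).mpr
        (norm_sub_le_mul_inner_of_mem_stolzRegion he hC.le hx)
  have hball : e - u ∈ Metric.closedBall (0 : E) √(1 - C⁻¹ ^ 2) := by
    rw [mem_closedBall_zero_iff, ← hu_norm]
    exact norm_sub_le_sqrt_one_sub_norm_sq he hu_inner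
  have hsegment : x ∈ segment ℝ e (e - u) := by
    refine ⟨1 - s, s, sub_nonneg.mpr hs1, hs0.le, sub_add_cancel 1 s, ?_⟩
    rw [smul_sub, hu, smul_inv_smul₀ hs0.ne']
    module
  exact segment_subset_convexHull (Set.mem_union_left _ (Set.mem_singleton e))
    (Set.mem_union_right _ hball) hsegment

theorem stolzRegion_subset_convexHull (he : ‖e‖ = 1) (hC : 0 < C) :
    stolzRegion e C ⊆ convexHull ℝ ({e} ∪ Metric.closedBall 0 √(1 - C⁻¹ ^ 2)) := by
  intro x hx
  rcases le_total ‖e - x‖ C⁻¹ with hnear | hfar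
  · exact mem_convexHull_of_mem_stolzRegion_of_norm_sub_le he hC hx hnear
  · exact subset_convexHull ℝ _ <| Or.inr <| mem_closedBall_zero_iff.mpr <|
      norm_le_sqrt_of_mem_stolzRegion_of_le_norm_sub hC hx hfar

theorem exists_stolzRegion_subset_convexHull (he : ‖e‖ = 1) (hC : 0 < C) :
    ∃ r ∈ Set.Ioo (0 : ℝ) 1, stolzRegion e C ⊆ convexHull ℝ ({e} ∪ Metric.closedBall 0 r) := by
  have hlt : √(1 - C⁻¹ ^ 2) < 1 := by
    rw [Real.sqrt_lt' one_pos, one_pow]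
    exact sub_lt_self 1 (by positivity)
  obtain ⟨r, hr, hr1⟩ := exists_between hlt
  refine ⟨r, ⟨(Real.sqrt_nonneg _).trans_lt hr, hr1⟩, ?_⟩
  exact (stolzRegion_subset_convexHull he hC).trans <| convexHull_mono <|
    Set.union_subset_union_right _ (Metric.closedBall_subset_closedBall hr.le)

end StolzRegion

theorem exists_norm_eq_and_norm_sub_eq {E : Type*} [NormedAddCommGroup E] [NormedSpace ℝ E]
    [Nontrivial E] (x : E) {s : ℝ} (hs : 0 ≤ s) : ∃ y : E, ‖y‖ = s ∧ ‖y - x‖ = |s - ‖x‖| := by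
  rcases eq_or_ne x 0 with rfl | hx
  · obtain ⟨y, hy⟩ := exists_norm_eq E hs
    exact ⟨y, hy, by simp [hy, abs_of_nonneg hs]⟩
  · have hy : ‖(s / ‖x‖) • x‖ = s := by
      rw [norm_smul, Real.norm_of_nonneg (by positivity),
        div_mul_cancel₀ _ (norm_ne_zero_iff.mpr hx)]
    refine ⟨(s / ‖x‖) • x, hy, ?_⟩
    rw [(SameRay.sameRay_nonneg_smul_left x (by positivity)).norm_sub, hy]

theorem one_le_norm_sub_mul_norm_resolvent {𝕜 A : Type*} [NormedField 𝕜] [NormedRing A]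
    [NormedAlgebra 𝕜 A] [HasSummableGeomSeries A] {a : A} {z l : 𝕜} (hz : z ∈ spectrum 𝕜 a)
    (hl : l ∈ resolventSet 𝕜 a) : 1 ≤ ‖l - z‖ * ‖resolvent a l‖ := by
  by_contra! hlt
  have hunit : IsUnit (1 - (l - z) • resolvent a l) :=
    isUnit_one_sub_of_norm_lt_one ((norm_smul_le _ _).trans_lt hlt)
  have hcancel : (algebraMap 𝕜 A l - a) * resolvent a l = 1 := Ring.mul_inverse_cancel _ hl
  have hfactor : algebraMap 𝕜 A z - a =
      (algebraMap 𝕜 A l - a) * (1 - (l - z) • resolvent a l) := by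
    rw [mul_sub, mul_one, mul_smul_comm, hcancel, ← Algebra.algebraMap_eq_smul_one, map_sub]
    abel
  refine hz ?_
  rw [spectrum.mem_resolventSet_iff, hfactor]
  exact hl.mul hunit

section Ritt

variable {𝕜 A : Type*} [RCLike 𝕜] [NormedRing A] [NormedAlgebra 𝕜 A]

variable (𝕜) in
/-- Ritt elements with constant `K` of a normed algebra; a Ritt operator on `X` is a Ritt element
of the algebra of bounded operators on `X`. -/
def IsRitt (a : A) (K : ℝ) : Prop :=
  ∀ l : 𝕜, 1 < ‖l‖ → l ∈ resolventSet 𝕜 a ∧ ‖(l - 1) • resolvent a l‖ ≤ K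

namespace IsRitt

variable {a : A} {K : ℝ} {z l : 𝕜}

theorem nonneg (h : IsRitt 𝕜 a K) : 0 ≤ K :=
  (norm_nonneg _).trans (h 2 (by simp)).2

theorem norm_le_one_of_mem_spectrum (h : IsRitt 𝕜 a K) (hz : z ∈ spectrum 𝕜 a) : ‖z‖ ≤ 1 := by
  by_contra! hlt
  exact hz (h z hlt).1

variable [HasSummableGeomSeries A]

theorem norm_sub_one_le_of_one_lt_norm (h : IsRitt 𝕜 a K) (hz : z ∈ spectrum 𝕜 a)
    (hl : 1 < ‖l‖) : ‖l - 1‖ ≤ K * ‖l - z‖ := by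
  obtain ⟨hres, hK⟩ := h l hl
  calc
    ‖l - 1‖ ≤ ‖l - 1‖ * (‖l - z‖ * ‖resolvent a l‖) :=
      le_mul_of_one_le_right (norm_nonneg _) (one_le_norm_sub_mul_norm_resolvent hz hres)
    _ = ‖(l - 1) • resolvent a l‖ * ‖l - z‖ := by rw [norm_smul]; ring
    _ ≤ K * ‖l - z‖ := by gcongr

theorem norm_sub_one_le_of_one_le_norm (h : IsRitt 𝕜 a K) (hz : z ∈ spectrum 𝕜 a)
    (hl : 1 ≤ ‖l‖) : ‖l - 1‖ ≤ K * ‖l - z‖ := by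
  have hclosure : l ∈ closure (Metric.closedBall (0 : 𝕜) 1)ᶜ := by
    rw [closure_compl, interior_closedBall _ one_ne_zero]
    simpa using hl
  refine le_on_closure (f := fun w : 𝕜 => ‖w - 1‖) (g := fun w => K * ‖w - z‖) (fun w hw => ?_)
    (by fun_prop) (by fun_prop) hclosure
  exact h.norm_sub_one_le_of_one_lt_norm hz (by simpa using hw)

theorem spectrum_subset_stolzRegion (h : IsRitt 𝕜 a K) :
    spectrum 𝕜 a ⊆ stolzRegion 1 (K + 1) := by
  intro z hz
  obtain ⟨l, hl, hlz⟩ := exists_norm_eq_and_norm_sub_eq z zero_le_one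
  rw [abs_of_nonneg (sub_nonneg.mpr (h.norm_le_one_of_mem_spectrum hz))] at hlz
  calc
    ‖1 - z‖ ≤ ‖1 - l‖ + ‖l - z‖ := norm_sub_le_norm_sub_add_norm_sub 1 l z
    _ ≤ K * ‖l - z‖ + ‖l - z‖ := by
      rw [norm_sub_rev 1 l]
      gcongr
      exact h.norm_sub_one_le_of_one_le_norm hz hl.ge
    _ = (K + 1) * (1 - ‖z‖) := by rw [hlz]; ring

end IsRitt

theorem stmt_3_general [HasSummableGeomSeries A] {a : A} {K : ℝ} (h : IsRitt 𝕜 a K) :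
    ∃ r ∈ Set.Ioo (0 : ℝ) 1,
      spectrum 𝕜 a ⊆ convexHull ℝ ({1} ∪ Metric.closedBall (0 : 𝕜) r) := by
  have hC : 0 < K + 1 := by linarith [h.nonneg]
  obtain ⟨r, hr, hsubset⟩ := exists_stolzRegion_subset_convexHull (norm_one (α := 𝕜)) hC
  exact ⟨r, hr, h.spectrum_subset_stolzRegion.trans hsubset⟩

end Ritt

/-- The spectrum of a Ritt operator is contained in `B_r`, the convex hull of `{1}` and the
closed ball of radius `r` centred at `0`, for some `r ∈ (0,1)`. -/
theorem stmt_3 {X : Type*} [NormedAddCommGroup X] [NormedSpace ℂ X] [CompleteSpace X]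
    [Nontrivial X] (T : X →L[ℂ] X) (K : ℝ)
    (hRitt : ∀ l : ℂ, 1 < ‖l‖ →
      l ∈ resolventSet ℂ T ∧ ‖(l - 1) • resolvent T l‖ ≤ K) :
    ∃ r ∈ Set.Ioo (0 : ℝ) 1,
      spectrum ℂ T ⊆ convexHull ℝ ({1} ∪ Metric.closedBall (0 : ℂ) r) :=
  stmt_3_general hRitt
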